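/- For all a, b ∈ ℝ² with a ≠ b, lim_{β → ∞} I_β(a,b) = 2 ∫_0^∞ √(π/(1 + 2u²)) · e^{-u²|a - b|²} du. -/

import Mathlib

open Real MeasureTheory Filter Topology

/-- The normalized 2d Gaussian `δ_{a,β}` evaluated at `(x₁, x₂) ∈ ℝ²`. -/
noncomputable def deltaGauss2 (β : ℝ) (a : EuclideanSpace ℝ (Fin 2)) (x₁ x₂ : ℝ) : ℝ :=
  (β / π) * Real.exp (-β * ((x₁ - a 0) ^ 2 + (x₂ - a 1) ^ 2))

/-- The six-dimensional Coulomb-kernel integral `I_β(a,b)` of Appendix A. -/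
noncomputable def Ibeta (β : ℝ) (a b : EuclideanSpace ℝ (Fin 2)) : ℝ :=
  ∫ p : EuclideanSpace ℝ (Fin 3) × EuclideanSpace ℝ (Fin 3),
    deltaGauss2 β a (p.1 0) (p.1 1) * Real.exp (-(p.1 2) ^ 2) *
      (deltaGauss2 β b (p.2 0) (p.2 1) * Real.exp (-(p.2 2) ^ 2)) / ‖p.1 - p.2‖

/-!
Write `1 / r = 2 / √π * ∫ u in Ioi 0, exp (-u² r²)` and exchange the integrals. For fixed `u` the
six-dimensional integral is Gaussian and factors into three integrals over the pairs `(xᵢ, yᵢ)`: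
the two mollified coordinates contribute `w exp (-w u² |a - b|²)` with `w = β / (β + 2 u²)`, the
third one `√(π / (1 + 2 u²))`. As `β → ∞`, `w → 1`, and the limit passes under the integral since
`w exp (-w t) ≤ 1 / (1 + t)` for all `w ≤ 1`; at `t = u² |a - b|²` this is integrable in `u`
because `a ≠ b`.
-/

section Integration

variable {α β : Type*} [MeasurableSpace α] [MeasurableSpace β] {μ : Measure α} {ν : Measure β}

lemma integral_integral_swap_of_nonneg [SFinite μ] [SFinite ν] {f : α → β → ℝ}
    (hf : AEStronglyMeasurable (Function.uncurry f) (μ.prod ν)) (hf_nonneg : ∀ x y, 0 ≤ f x y)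
    (hf_left : ∀ᵐ x ∂μ, Integrable (f x) ν)
    (hf_right : ∀ᵐ y ∂ν, Integrable (fun x => f x y) μ) :
    ∫ x, ∫ y, f x y ∂ν ∂μ = ∫ y, ∫ x, f x y ∂μ ∂ν := by
  by_cases h : Integrable (Function.uncurry f) (μ.prod ν)
  · exact integral_integral_swap h
  -- Neither iterated integral converges, so both are `0` by convention.
  have norm_eq : ∀ x y, ‖f x y‖ = f x y := fun x y => Real.norm_of_nonneg (hf_nonneg x y)
  rw [integral_undef, integral_undef]
  · exact fun h' => h ((integrable_prod_iff' hf).2 ⟨hf_right, by simpa [norm_eq] using h'⟩)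
  · exact fun h' => h ((integrable_prod_iff hf).2 ⟨hf_left, by simpa [norm_eq] using h'⟩)

lemma ae_prod_fst_ne_snd {μ₁ μ₂ : Measure α} [MeasurableEq α] [SFinite μ₂]
    [NullSingletonClass μ₂] : ∀ᵐ p ∂μ₁.prod μ₂, p.1 ≠ p.2 :=
  (Measure.ae_prod_iff_ae_ae measurableSet_diagonal.compl).2 <| .of_forall fun x =>
    (μ₂.ae_ne x).mono fun _ h => h.symm

lemma inv_eq_integral_Ioi_exp_neg_sq_mul_sq {r : ℝ} (hr : 0 < r) :
    r⁻¹ = 2 / √π * ∫ u in Set.Ioi (0 : ℝ), exp (-u ^ 2 * r ^ 2) := by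
  have hπ : √π ≠ 0 := by positivity
  simp_rw [neg_mul, mul_comm _ (r ^ 2), ← neg_mul]
  rw [integral_gaussian_Ioi, Real.sqrt_div pi_pos.le, Real.sqrt_sq hr.le]
  field_simp

lemma integral_div_eq_integral_Ioi_integral_mul_exp [SFinite μ] {w r : α → ℝ}
    (hw : Integrable w μ) (hw_nonneg : ∀ x, 0 ≤ w x) (hr : Measurable r)
    (hr_pos : ∀ᵐ x ∂μ, 0 < r x) :
    ∫ x, w x / r x ∂μ =
      2 / √π * ∫ u in Set.Ioi (0 : ℝ), ∫ x, w x * exp (-u ^ 2 * r x ^ 2) ∂μ := by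
  have integrable_in_u : ∀ᵐ x ∂μ,
      IntegrableOn (fun u => w x * exp (-u ^ 2 * r x ^ 2)) (Set.Ioi 0) := by
    filter_upwards [hr_pos] with x hx
    refine Integrable.integrableOn (Integrable.const_mul ?_ _)
    simpa only [neg_mul, mul_comm (r x ^ 2)] using integrable_exp_neg_mul_sq (pow_pos hx 2)
  have integrable_in_x (u : ℝ) : Integrable (fun x => w x * exp (-u ^ 2 * r x ^ 2)) μ := by
    refine hw.mul_bdd (c := 1) (by fun_prop) (.of_forall fun x => ?_)
    rw [Real.norm_of_nonneg (exp_pos _).le, Real.exp_le_one_iff, neg_mul, neg_nonpos]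
    positivity
  have measurable_joint : AEStronglyMeasurable
      (Function.uncurry fun x u => w x * exp (-u ^ 2 * r x ^ 2))
      (μ.prod (volume.restrict (Set.Ioi 0))) :=
    hw.aestronglyMeasurable.comp_fst.mul (by fun_prop)
  calc ∫ x, w x / r x ∂μ
      = ∫ x, 2 / √π * (∫ u in Set.Ioi (0 : ℝ), w x * exp (-u ^ 2 * r x ^ 2)) ∂μ := by
        refine integral_congr_ae (hr_pos.mono fun x hx => ?_)
        simp only [integral_const_mul]
        rw [div_eq_mul_inv, inv_eq_integral_Ioi_exp_neg_sq_mul_sq hx, mul_left_comm]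
    _ = 2 / √π * ∫ u in Set.Ioi (0 : ℝ), ∫ x, w x * exp (-u ^ 2 * r x ^ 2) ∂μ := by
        rw [integral_const_mul, integral_integral_swap_of_nonneg measurable_joint
          (fun x u => mul_nonneg (hw_nonneg x) (exp_pos _).le) integrable_in_u
          (.of_forall integrable_in_x)]

end Integration

section GaussianPair

lemma integrable_exp_neg_mul_sub_sq {β : ℝ} (hβ : 0 < β) (a : ℝ) :
    Integrable fun s => exp (-(β * (s - a) ^ 2)) := by
  simpa only [neg_mul] using (integrable_exp_neg_mul_sq hβ).comp_sub_right a

lemma integral_exp_neg_mul_sub_sq_add {β γ : ℝ} (h : 0 < β + γ) (a b : ℝ) :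
    ∫ s, exp (-(β * (s - a) ^ 2 + γ * (s - b) ^ 2)) =
      √(π / (β + γ)) * exp (-(β * γ / (β + γ) * (a - b) ^ 2)) := by
  have complete_square (s : ℝ) : -(β * (s - a) ^ 2 + γ * (s - b) ^ 2) =
      -(β * γ / (β + γ) * (a - b) ^ 2) +
        -(β + γ) * (s - (β * a + γ * b) / (β + γ)) ^ 2 := by
    field_simp
    ring
  simp_rw [complete_square, Real.exp_add, integral_const_mul]
  rw [integral_sub_right_eq_self (fun s => exp (-(β + γ) * s ^ 2)), integral_gaussian, mul_comm]

/-- The unnormalized density of two real Gaussian variables, centred at `a` and `b` with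
precisions `β` and `γ`, coupled by the factor `exp (-c (s - t)²)`. -/
noncomputable def coupledGaussian (β γ c a b : ℝ) (q : ℝ × ℝ) : ℝ :=
  exp (-(β * (q.1 - a) ^ 2 + γ * (q.2 - b) ^ 2 + c * (q.1 - q.2) ^ 2))

variable {β γ c : ℝ}

lemma integrable_coupledGaussian (hβ : 0 < β) (hγ : 0 < γ) (hc : 0 ≤ c) (a b : ℝ) :
    Integrable (coupledGaussian β γ c a b) := by
  have hprod := (integrable_exp_neg_mul_sub_sq hβ a).mul_prod (integrable_exp_neg_mul_sub_sq hγ b)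
  refine hprod.mono' (by unfold coupledGaussian; fun_prop) (.of_forall fun q => ?_)
  rw [coupledGaussian, Real.norm_of_nonneg (exp_pos _).le, ← Real.exp_add, Real.exp_le_exp]
  linarith [mul_nonneg hc (sq_nonneg (q.1 - q.2))]

lemma integral_coupledGaussian (hβ : 0 < β) (hγ : 0 < γ) (hc : 0 ≤ c) (a b : ℝ) :
    ∫ q, coupledGaussian β γ c a b q = π / √(β * γ + c * (β + γ)) *
      exp (-(β * γ * c / (β * γ + c * (β + γ)) * (a - b) ^ 2)) := by
  have hγc : 0 < γ + c := by positivity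
  have integral_snd (s : ℝ) : ∫ t, coupledGaussian β γ c a b (s, t) =
      √(π / (γ + c)) * exp (-(β * (s - a) ^ 2 + γ * c / (γ + c) * (s - b) ^ 2)) := by
    have split (t : ℝ) : coupledGaussian β γ c a b (s, t) =
        exp (-(β * (s - a) ^ 2)) * exp (-(γ * (t - b) ^ 2 + c * (t - s) ^ 2)) := by
      rw [coupledGaussian, ← Real.exp_add]
      ring_nf
    simp_rw [split, integral_const_mul]
    rw [integral_exp_neg_mul_sub_sq_add hγc, mul_left_comm, ← Real.exp_add]
    ring_nf
  rw [Measure.volume_eq_prod, integral_prod _ (integrable_coupledGaussian hβ hγ hc a b)]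
  simp_rw [integral_snd, integral_const_mul]
  have sqrt_sq_div : π / √(β * γ + c * (β + γ)) = √(π ^ 2 / (β * γ + c * (β + γ))) := by
    rw [Real.sqrt_div (sq_nonneg π), Real.sqrt_sq pi_pos.le]
  rw [integral_exp_neg_mul_sub_sq_add (by positivity), ← mul_assoc,
    ← Real.sqrt_mul (by positivity), sqrt_sq_div]
  congr 2
  · field_simp
    ring
  · field_simp
    ring

lemma integral_coupledGaussian_self (hβ : 0 < β) (u a b : ℝ) :
    ∫ q, coupledGaussian β β (u ^ 2) a b q = π / √(β * (β + 2 * u ^ 2)) *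
      exp (-(β / (β + 2 * u ^ 2) * u ^ 2 * (a - b) ^ 2)) := by
  rw [integral_coupledGaussian hβ hβ (sq_nonneg u),
    show β * β + u ^ 2 * (β + β) = β * (β + 2 * u ^ 2) by ring]
  congr 3
  field_simp

end GaussianPair

section AnisotropicGaussian

variable {ι : Type*} [Fintype ι]

/-- The unnormalized Gaussian on `ℝ^ι` centred at `a`, with precision `β i` in the direction of
the `i`-th coordinate. -/
noncomputable def anisotropicGaussian (β : ι → ℝ) (a x : EuclideanSpace ℝ ι) : ℝ :=
  exp (-∑ i, β i * (x i - a i) ^ 2)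

lemma integrable_anisotropicGaussian {β : ι → ℝ} (hβ : ∀ i, 0 < β i) (a : EuclideanSpace ℝ ι) :
    Integrable (anisotropicGaussian β a) := by
  have hpi : Integrable fun x : ι → ℝ => ∏ i, exp (-(β i * (x i - a i) ^ 2)) :=
    .fintype_prod fun i => integrable_exp_neg_mul_sub_sq (hβ i) (a i)
  refine ((PiLp.volume_preserving_ofLp ι).integrable_comp_of_integrable hpi).congr
    (.of_forall fun x => ?_)
  simp only [Function.comp_apply, anisotropicGaussian, ← Finset.sum_neg_distrib, Real.exp_sum]

lemma measurePreserving_pairCoords : MeasurePreserving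
    fun (p : EuclideanSpace ℝ ι × EuclideanSpace ℝ ι) (i : ι) => (p.1 i, p.2 i) :=
  (volume_measurePreserving_arrowProdEquivProdArrow ℝ ℝ ι).symm.comp
    ((PiLp.volume_preserving_ofLp ι).prod (PiLp.volume_preserving_ofLp ι))

lemma integral_anisotropicGaussian_mul_exp_neg_norm_sq (β γ : ι → ℝ) (c : ℝ)
    (a b : EuclideanSpace ℝ ι) :
    ∫ p : EuclideanSpace ℝ ι × EuclideanSpace ℝ ι,
        anisotropicGaussian β a p.1 * anisotropicGaussian γ b p.2 * exp (-c * ‖p.1 - p.2‖ ^ 2) =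
      ∏ i, ∫ q, coupledGaussian (β i) (γ i) c (a i) (b i) q := by
  have factor (p : EuclideanSpace ℝ ι × EuclideanSpace ℝ ι) :
      anisotropicGaussian β a p.1 * anisotropicGaussian γ b p.2 * exp (-c * ‖p.1 - p.2‖ ^ 2) =
        ∏ i, coupledGaussian (β i) (γ i) c (a i) (b i) (p.1 i, p.2 i) := by
    simp only [anisotropicGaussian, coupledGaussian, EuclideanSpace.real_norm_sq_eq,
      PiLp.sub_apply, Finset.mul_sum, ← Finset.sum_neg_distrib, ← Real.exp_add, ← Real.exp_sum,
      ← Finset.sum_add_distrib]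
    congr! 2
    ring
  have hcont : Continuous fun q : ι → ℝ × ℝ =>
      ∏ i, coupledGaussian (β i) (γ i) c (a i) (b i) (q i) := by
    unfold coupledGaussian
    fun_prop
  rw [← integral_fintype_prod_volume_eq_prod, ← measurePreserving_pairCoords.map_eq,
    integral_map measurePreserving_pairCoords.aemeasurable hcont.aestronglyMeasurable]
  exact integral_congr_ae (.of_forall factor)

end AnisotropicGaussian

section CoulombKernel

/-- The integrand, at distance `d`, of the partially contracted Coulomb kernel with damping factor
`w`: mollification at scale `β` produces `w = β / (β + 2 u²)`, and `w = 1` is the limit kernel. -/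
noncomputable def dampedKernel (d w u : ℝ) : ℝ :=
  √(π / (1 + 2 * u ^ 2)) * (w * exp (-(w * (d * u) ^ 2)))

/-- The unnormalized form of `δ_{a,β} ⊗ φ` on `ℝ³`. -/
noncomputable def planarGaussian (β : ℝ) (a : EuclideanSpace ℝ (Fin 2)) :
    EuclideanSpace ℝ (Fin 3) → ℝ :=
  anisotropicGaussian ![β, β, 1] !₂[a 0, a 1, 0]

lemma deltaGauss2_mul_exp_neg_sq (β : ℝ) (a : EuclideanSpace ℝ (Fin 2))
    (x : EuclideanSpace ℝ (Fin 3)) :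
    deltaGauss2 β a (x 0) (x 1) * exp (-(x 2) ^ 2) = β / π * planarGaussian β a x := by
  rw [deltaGauss2, mul_assoc, ← Real.exp_add, planarGaussian, anisotropicGaussian,
    Fin.sum_univ_three]
  congr 2
  simp only [Matrix.cons_val_zero, Matrix.cons_val_one, Matrix.cons_val]
  ring

lemma integrable_planarGaussian {β : ℝ} (hβ : 0 < β) (a : EuclideanSpace ℝ (Fin 2)) :
    Integrable (planarGaussian β a) :=
  integrable_anisotropicGaussian (by simp [Fin.forall_fin_succ, hβ]) _

lemma integral_planarGaussian_mul_exp_neg_norm_sq {β : ℝ} (hβ : 0 < β)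
    (a b : EuclideanSpace ℝ (Fin 2)) (u : ℝ) :
    ∫ p : EuclideanSpace ℝ (Fin 3) × EuclideanSpace ℝ (Fin 3),
        planarGaussian β a p.1 * planarGaussian β b p.2 * exp (-u ^ 2 * ‖p.1 - p.2‖ ^ 2) =
      (π / β) ^ 2 * √π * dampedKernel ‖a - b‖ (β / (β + 2 * u ^ 2)) u := by
  have out_of_plane : ∫ q, coupledGaussian 1 1 (u ^ 2) 0 0 q = √π * √(π / (1 + 2 * u ^ 2)) := by
    rw [integral_coupledGaussian_self one_pos, one_mul, sub_self, zero_pow two_ne_zero, mul_zero,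
      neg_zero, Real.exp_zero, mul_one, Real.sqrt_div pi_pos.le, ← mul_div_assoc,
      Real.mul_self_sqrt pi_pos.le]
  have in_plane : (∫ q, coupledGaussian β β (u ^ 2) (a 0) (b 0) q) *
      ∫ q, coupledGaussian β β (u ^ 2) (a 1) (b 1) q =
        (π / β) ^ 2 * (β / (β + 2 * u ^ 2) *
          exp (-(β / (β + 2 * u ^ 2) * (‖a - b‖ * u) ^ 2))) := by
    have norm_sq : ‖a - b‖ ^ 2 = (a 0 - b 0) ^ 2 + (a 1 - b 1) ^ 2 := by
      simp [EuclideanSpace.real_norm_sq_eq]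
    rw [integral_coupledGaussian_self hβ, integral_coupledGaussian_self hβ, mul_mul_mul_comm,
      div_mul_div_comm, Real.mul_self_sqrt (by positivity), ← Real.exp_add, ← mul_assoc,
      mul_pow, norm_sq]
    congr 2
    · field_simp
    · ring
  simp only [planarGaussian]
  rw [integral_anisotropicGaussian_mul_exp_neg_norm_sq, Fin.prod_univ_three]
  simp only [Matrix.cons_val_zero, Matrix.cons_val_one, Matrix.cons_val]
  rw [in_plane, out_of_plane, dampedKernel]
  ring

lemma Ibeta_eq_integral_dampedKernel {β : ℝ} (hβ : 0 < β) (a b : EuclideanSpace ℝ (Fin 2)) :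
    Ibeta β a b =
      2 * ∫ u in Set.Ioi (0 : ℝ), dampedKernel ‖a - b‖ (β / (β + 2 * u ^ 2)) u := by
  have dist_pos : ∀ᵐ p : EuclideanSpace ℝ (Fin 3) × EuclideanSpace ℝ (Fin 3),
      0 < ‖p.1 - p.2‖ :=
    ae_prod_fst_ne_snd.mono fun p hp => norm_sub_pos_iff.2 hp
  have normalize (p : EuclideanSpace ℝ (Fin 3) × EuclideanSpace ℝ (Fin 3)) :
      deltaGauss2 β a (p.1 0) (p.1 1) * exp (-(p.1 2) ^ 2) *
          (deltaGauss2 β b (p.2 0) (p.2 1) * exp (-(p.2 2) ^ 2)) / ‖p.1 - p.2‖ =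
        (β / π) ^ 2 * (planarGaussian β a p.1 * planarGaussian β b p.2 / ‖p.1 - p.2‖) := by
    rw [deltaGauss2_mul_exp_neg_sq, deltaGauss2_mul_exp_neg_sq]
    ring
  simp_rw [Ibeta, normalize]
  rw [integral_const_mul, Measure.volume_eq_prod, integral_div_eq_integral_Ioi_integral_mul_exp
    ((integrable_planarGaussian hβ a).mul_prod (integrable_planarGaussian hβ b))
    (fun p => mul_nonneg (exp_pos _).le (exp_pos _).le) (by fun_prop) dist_pos]
  simp_rw [← Measure.volume_eq_prod, integral_planarGaussian_mul_exp_neg_norm_sq hβ]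
  rw [integral_const_mul]
  field_simp

lemma mul_exp_neg_mul_le_inv_one_add {w x : ℝ} (hw : w ≤ 1) (hx : -1 < x) :
    w * exp (-(w * x)) ≤ (1 + x)⁻¹ := by
  have hx' : 0 < 1 + x := by linarith
  rw [Real.exp_neg, ← div_eq_mul_inv, inv_eq_one_div, div_le_div_iff₀ (exp_pos _) hx', one_mul]
  linarith [Real.add_one_le_exp (w * x)]

lemma norm_dampedKernel_le {w : ℝ} (hw₀ : 0 ≤ w) (hw₁ : w ≤ 1) (d u : ℝ) :
    ‖dampedKernel d w u‖ ≤ √π * (1 + (d * u) ^ 2)⁻¹ := by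
  rw [dampedKernel, Real.norm_of_nonneg (by positivity)]
  gcongr
  · exact div_le_self pi_pos.le (by linarith [sq_nonneg u])
  · exact mul_exp_neg_mul_le_inv_one_add hw₁ (by linarith [sq_nonneg (d * u)])

lemma tendsto_div_self_add_atTop (k : ℝ) : Tendsto (fun x : ℝ => x / (x + k)) atTop (𝓝 1) := by
  have htail : Tendsto (fun x : ℝ => 1 - k / (x + k)) atTop (𝓝 1) := by
    simpa only [sub_zero, id] using (tendsto_const_nhds (x := (1 : ℝ))).sub
      ((tendsto_const_nhds (x := k)).div_atTop (tendsto_atTop_add_const_right _ k tendsto_id))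
  refine htail.congr' ?_
  filter_upwards [eventually_gt_atTop (-k)] with x hx
  have hxk : x + k ≠ 0 := by linarith
  field_simp
  ring

lemma tendsto_dampedKernel (d u : ℝ) :
    Tendsto (fun β : ℝ => dampedKernel d (β / (β + 2 * u ^ 2)) u) atTop
      (𝓝 (dampedKernel d 1 u)) := by
  have hcont : Continuous fun w => dampedKernel d w u := by unfold dampedKernel; fun_prop
  exact (hcont.tendsto 1).comp (tendsto_div_self_add_atTop _)

lemma tendsto_integral_dampedKernel {d : ℝ} (hd : d ≠ 0) :
    Tendsto (fun β : ℝ => ∫ u in Set.Ioi (0 : ℝ), dampedKernel d (β / (β + 2 * u ^ 2)) u) atTop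
      (𝓝 (∫ u in Set.Ioi (0 : ℝ), dampedKernel d 1 u)) := by
  refine tendsto_integral_filter_of_dominated_convergence
    (fun u => √π * (1 + (d * u) ^ 2)⁻¹) ?_ ?_ ?_ ?_
  · exact .of_forall fun β => by unfold dampedKernel; fun_prop
  · filter_upwards [eventually_gt_atTop 0] with β hβ
    exact .of_forall fun u => norm_dampedKernel_le (by positivity)
      (div_le_one_of_le₀ (by linarith [sq_nonneg u]) (by positivity)) d u
  · exact ((integrable_inv_one_add_sq.comp_mul_left' hd).const_mul _).integrableOn
  · exact .of_forall fun u => tendsto_dampedKernel d u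

end CoulombKernel

theorem Ibeta_limit (a b : EuclideanSpace ℝ (Fin 2)) (hab : a ≠ b) :
    Tendsto (fun β : ℝ => Ibeta β a b) atTop
      (𝓝 (2 * ∫ u in Set.Ioi (0 : ℝ),
        Real.sqrt (π / (1 + 2 * u ^ 2)) * Real.exp (-u ^ 2 * ‖a - b‖ ^ 2))) := by
  have hd : ‖a - b‖ ≠ 0 := norm_ne_zero_iff.2 (sub_ne_zero.2 hab)
  have limit_eq (u : ℝ) : √(π / (1 + 2 * u ^ 2)) * exp (-u ^ 2 * ‖a - b‖ ^ 2) =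
      dampedKernel ‖a - b‖ 1 u := by
    rw [dampedKernel]
    ring_nf
  simp_rw [limit_eq]
  refine ((tendsto_integral_dampedKernel hd).const_mul 2).congr' ?_
  filter_upwards [eventually_gt_atTop 0] with β hβ
  exact (Ibeta_eq_integral_dampedKernel hβ a b).symm
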